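/- Assume 3 ≤ a ≤ b and t = p − 1, and let x* = (p − (a + b − 5/2))/(ηp − (16p − 14a − 14b + 20)). Let s be a block array in which exactly p − 1 distinct treatments occur (so exactly one treatment occurs twice and all others occur once) and every treatment is connected in s, but s ∉ Q₁; and let s* be any block array in Q₁. Then q_{s*}(x*) > q_s(x*). -/

import Mathlib

open Matrix

namespace TwoDim

/-- The set of plots of an `a × b` block. -/
abbrev Plot (a b : ℕ) := Fin a × Fin b

/-- A block array: an assignment of one of `t` treatments to each plot. -/
abbrev BlockArray (a b t : ℕ) := Plot a b → Fin t

/-- The all-ones matrix. -/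
def Jmat (n : Type*) : Matrix n n ℝ := Matrix.of fun _ _ => 1

/-- `B_m = I - J/m`. -/
noncomputable def Bmat (n : Type*) [Fintype n] [DecidableEq n] : Matrix n n ℝ :=
  1 - ((Fintype.card n : ℝ))⁻¹ • Jmat n

variable {a b t : ℕ}

/-- The treatment incidence matrix `T_s`. -/
def Tmat (s : BlockArray a b t) : Matrix (Plot a b) (Fin t) ℝ :=
  Matrix.of fun q k => if s q = k then 1 else 0

/-- Two plots are neighbors if they agree in one coordinate and differ by 1 in the other. -/
def Neighbor (q r : Plot a b) : Prop :=
  (q.1 = r.1 ∧ (q.2.val + 1 = r.2.val ∨ r.2.val + 1 = q.2.val)) ∨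
  (q.2 = r.2 ∧ (q.1.val + 1 = r.1.val ∨ r.1.val + 1 = q.1.val))

instance (q r : Plot a b) : Decidable (Neighbor q r) := by
  unfold Neighbor; infer_instance

/-- The adjacency matrix of the neighbor relation. -/
def Mmat (a b : ℕ) : Matrix (Plot a b) (Plot a b) ℝ :=
  Matrix.of fun q r => if Neighbor q r then 1 else 0

/-- `F_s = M T_s`. -/
def Fmat (s : BlockArray a b t) : Matrix (Plot a b) (Fin t) ℝ :=
  Mmat a b * Tmat s

/-- `B̃ = Σ⁻¹ − Σ⁻¹ J Σ⁻¹ / (1'Σ⁻¹1)`. -/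
noncomputable def Btilde (Sig : Matrix (Plot a b) (Plot a b) ℝ) :
    Matrix (Plot a b) (Plot a b) ℝ :=
  Sig⁻¹ - (∑ i, ∑ j, Sig⁻¹ i j)⁻¹ • (Sig⁻¹ * Jmat (Plot a b) * Sig⁻¹)

/-- `C_{s00} = T_s' W T_s` (with `W` playing the role of `B̃`). -/
def Cs00 (W : Matrix (Plot a b) (Plot a b) ℝ) (s : BlockArray a b t) :
    Matrix (Fin t) (Fin t) ℝ := (Tmat s)ᵀ * W * Tmat s

/-- `C_{s01} = T_s' W F_s`. -/
def Cs01 (W : Matrix (Plot a b) (Plot a b) ℝ) (s : BlockArray a b t) :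
    Matrix (Fin t) (Fin t) ℝ := (Tmat s)ᵀ * W * Fmat s

/-- `C_{s11} = F_s' W F_s`. -/
def Cs11 (W : Matrix (Plot a b) (Plot a b) ℝ) (s : BlockArray a b t) :
    Matrix (Fin t) (Fin t) ℝ := (Fmat s)ᵀ * W * Fmat s

/-- `c_{s00} = tr(B_t C_{s00})`. -/
noncomputable def cs00 (W : Matrix (Plot a b) (Plot a b) ℝ) (s : BlockArray a b t) : ℝ :=
  Matrix.trace (Bmat (Fin t) * Cs00 W s)

noncomputable def cs01 (W : Matrix (Plot a b) (Plot a b) ℝ) (s : BlockArray a b t) : ℝ :=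
  Matrix.trace (Bmat (Fin t) * Cs01 W s)

noncomputable def cs11 (W : Matrix (Plot a b) (Plot a b) ℝ) (s : BlockArray a b t) : ℝ :=
  Matrix.trace (Bmat (Fin t) * Cs11 W s)

/-- The quadratic `q_s(x) = c_{s00} + 2 c_{s01} x + c_{s11} x²`. -/
noncomputable def qpoly (W : Matrix (Plot a b) (Plot a b) ℝ) (s : BlockArray a b t) (x : ℝ) : ℝ :=
  cs00 W s + 2 * cs01 W s * x + cs11 W s * x ^ 2

/-- A measure on the set of block arrays: nonnegative weights summing to one. -/
def IsMeasure (ξ : BlockArray a b t → ℝ) : Prop :=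
  (∀ s, 0 ≤ ξ s) ∧ ∑ s, ξ s = 1

noncomputable def Cm00 (W : Matrix (Plot a b) (Plot a b) ℝ) (ξ : BlockArray a b t → ℝ) :
    Matrix (Fin t) (Fin t) ℝ := ∑ s, ξ s • Cs00 W s

noncomputable def Cm01 (W : Matrix (Plot a b) (Plot a b) ℝ) (ξ : BlockArray a b t → ℝ) :
    Matrix (Fin t) (Fin t) ℝ := ∑ s, ξ s • Cs01 W s

noncomputable def Cm11 (W : Matrix (Plot a b) (Plot a b) ℝ) (ξ : BlockArray a b t → ℝ) :
    Matrix (Fin t) (Fin t) ℝ := ∑ s, ξ s • Cs11 W s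

noncomputable def cm00 (W : Matrix (Plot a b) (Plot a b) ℝ) (ξ : BlockArray a b t → ℝ) : ℝ :=
  ∑ s, ξ s * cs00 W s

noncomputable def cm01 (W : Matrix (Plot a b) (Plot a b) ℝ) (ξ : BlockArray a b t → ℝ) : ℝ :=
  ∑ s, ξ s * cs01 W s

noncomputable def cm11 (W : Matrix (Plot a b) (Plot a b) ℝ) (ξ : BlockArray a b t → ℝ) : ℝ :=
  ∑ s, ξ s * cs11 W s

/-- `q*_ξ = c_{ξ00} − c_{ξ01}²/c_{ξ11}`. -/
noncomputable def qstar (W : Matrix (Plot a b) (Plot a b) ℝ) (ξ : BlockArray a b t → ℝ) : ℝ :=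
  cm00 W ξ - (cm01 W ξ) ^ 2 / cm11 W ξ

/-- `G` is a generalized inverse of `A`. -/
def IsGenInv (A G : Matrix (Fin t) (Fin t) ℝ) : Prop := A * G * A = A

/-- Information matrix `C_{ξ00} − C_{ξ01} G C_{ξ10}` computed with a generalized inverse `G`. -/
noncomputable def InfoMat (W : Matrix (Plot a b) (Plot a b) ℝ) (ξ : BlockArray a b t → ℝ)
    (G : Matrix (Fin t) (Fin t) ℝ) : Matrix (Fin t) (Fin t) ℝ :=
  Cm00 W ξ - Cm01 W ξ * G * (Cm01 W ξ)ᵀ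

/-- A criterion `Φ` on `t×t` real symmetric matrices: concave, Loewner-nondecreasing, and
invariant under simultaneous permutations of rows and columns. -/
def GoodPhi (t : ℕ) (Φ : Matrix (Fin t) (Fin t) ℝ → ℝ) : Prop :=
  (∀ A B : Matrix (Fin t) (Fin t) ℝ, A.IsSymm → B.IsSymm → ∀ α : ℝ, 0 ≤ α → α ≤ 1 →
      α * Φ A + (1 - α) * Φ B ≤ Φ (α • A + (1 - α) • B)) ∧
  (∀ A B : Matrix (Fin t) (Fin t) ℝ, A.IsSymm → B.IsSymm → (B - A).PosSemidef → Φ A ≤ Φ B) ∧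
  (∀ (σ : Equiv.Perm (Fin t)) (C : Matrix (Fin t) (Fin t) ℝ), Φ (C.submatrix σ σ) = Φ C)

/-- Universal optimality of a measure `ξ`. -/
def UnivOptimal (W : Matrix (Plot a b) (Plot a b) ℝ) (ξ : BlockArray a b t → ℝ) : Prop :=
  ∀ η : BlockArray a b t → ℝ, IsMeasure η →
    ∀ G H : Matrix (Fin t) (Fin t) ℝ, IsGenInv (Cm11 W ξ) G → IsGenInv (Cm11 W η) H →
      ∀ Φ : Matrix (Fin t) (Fin t) ℝ → ℝ, GoodPhi t Φ →
        Φ (InfoMat W η H) ≤ Φ (InfoMat W ξ G)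

/-- A measure is symmetric if it is invariant under relabeling of the treatments. -/
def IsSymmetricMeasure (ξ : BlockArray a b t → ℝ) : Prop :=
  ∀ (σ : Equiv.Perm (Fin t)) (s : BlockArray a b t), ξ (fun q => σ (s q)) = ξ s

/-- A matrix is completely symmetric if it is of the form `αI + βJ`. -/
def ComplSym (A : Matrix (Fin t) (Fin t) ℝ) : Prop :=
  ∃ α β : ℝ, A = α • (1 : Matrix (Fin t) (Fin t) ℝ) + β • Jmat (Fin t)

/-- A measure is pseudo symmetric if `C_{ξ00}`, `C_{ξ01}`, `C_{ξ11}` are completely symmetric. -/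
def PseudoSym (W : Matrix (Plot a b) (Plot a b) ℝ) (ξ : BlockArray a b t → ℝ) : Prop :=
  ComplSym (Cm00 W ξ) ∧ ComplSym (Cm01 W ξ) ∧ ComplSym (Cm11 W ξ)

/-- `r(x) = max_{s∈S} q_s(x)`. -/
noncomputable def rfun {a b : ℕ} (t : ℕ) (W : Matrix (Plot a b) (Plot a b) ℝ) (x : ℝ) : ℝ :=
  sSup (Set.range fun s : BlockArray a b t => qpoly W s x)

/-- `min_{s∈S} q_s(x)`. -/
noncomputable def rmin {a b : ℕ} (t : ℕ) (W : Matrix (Plot a b) (Plot a b) ℝ) (x : ℝ) : ℝ :=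
  sInf (Set.range fun s : BlockArray a b t => qpoly W s x)

/-- Number of plots assigned treatment `k` by `s`. -/
noncomputable def f0 (s : BlockArray a b t) (k : Fin t) : ℕ :=
  {q : Plot a b | s q = k}.ncard

/-- Replications of `k` among the columns `1,…,b−1`. -/
noncomputable def f1 (s : BlockArray a b t) (k : Fin t) : ℕ :=
  {q : Plot a b | s q = k ∧ q.2.val + 1 < b}.ncard

/-- Replications of `k` among the columns `2,…,b`. -/
noncomputable def f2 (s : BlockArray a b t) (k : Fin t) : ℕ :=
  {q : Plot a b | s q = k ∧ 1 ≤ q.2.val}.ncard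

/-- Replications of `k` among the rows `1,…,a−1`. -/
noncomputable def f3 (s : BlockArray a b t) (k : Fin t) : ℕ :=
  {q : Plot a b | s q = k ∧ q.1.val + 1 < a}.ncard

/-- Replications of `k` among the rows `2,…,a`. -/
noncomputable def f4 (s : BlockArray a b t) (k : Fin t) : ℕ :=
  {q : Plot a b | s q = k ∧ 1 ≤ q.1.val}.ncard

noncomputable def fc (s : BlockArray a b t) : ℕ → Fin t → ℕ
  | 0 => f0 s
  | 1 => f1 s
  | 2 => f2 s
  | 3 => f3 s
  | 4 => f4 s
  | _ => fun _ => 0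

/-- `h^{uv}_s = Σ_k f^u_{s,k} f^v_{s,k}`. -/
noncomputable def hval (s : BlockArray a b t) (u v : ℕ) : ℝ :=
  ∑ k : Fin t, (fc s u k : ℝ) * (fc s v k : ℝ)

noncomputable def h00 (s : BlockArray a b t) : ℝ := hval s 0 0

noncomputable def h1 (s : BlockArray a b t) : ℝ :=
  hval s 0 1 + hval s 0 2 + hval s 0 3 + hval s 0 4

noncomputable def h2 (s : BlockArray a b t) : ℝ :=
  hval s 1 1 + hval s 2 2 + hval s 3 3 + hval s 4 4

noncomputable def h3 (s : BlockArray a b t) : ℝ :=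
  hval s 1 2 + hval s 1 3 + hval s 1 4 + hval s 2 3 + hval s 2 4 + hval s 3 4

/-- `z¹_{s,r}`: horizontally adjacent pairs of plots receiving the same treatment. -/
noncomputable def zr1 (s : BlockArray a b t) : ℕ :=
  {qr : Plot a b × Plot a b |
    qr.1.1 = qr.2.1 ∧ qr.1.2.val + 1 = qr.2.2.val ∧ s qr.1 = s qr.2}.ncard

noncomputable def zr2 (s : BlockArray a b t) : ℕ :=
  {qr : Plot a b × Plot a b |
    qr.1.1 = qr.2.1 ∧ qr.1.2.val + 2 = qr.2.2.val ∧ s qr.1 = s qr.2}.ncard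

noncomputable def zc1 (s : BlockArray a b t) : ℕ :=
  {qr : Plot a b × Plot a b |
    qr.1.2 = qr.2.2 ∧ qr.1.1.val + 1 = qr.2.1.val ∧ s qr.1 = s qr.2}.ncard

noncomputable def zc2 (s : BlockArray a b t) : ℕ :=
  {qr : Plot a b × Plot a b |
    qr.1.2 = qr.2.2 ∧ qr.1.1.val + 2 = qr.2.1.val ∧ s qr.1 = s qr.2}.ncard

/-- pairs `(i,j)`, `(i−1,j+1)` with the same treatment. -/
noncomputable def zd1 (s : BlockArray a b t) : ℕ :=
  {qr : Plot a b × Plot a b |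
    qr.2.1.val + 1 = qr.1.1.val ∧ qr.1.2.val + 1 = qr.2.2.val ∧ s qr.1 = s qr.2}.ncard

/-- pairs `(i,j)`, `(i+1,j+1)` with the same treatment. -/
noncomputable def zd2 (s : BlockArray a b t) : ℕ :=
  {qr : Plot a b × Plot a b |
    qr.1.1.val + 1 = qr.2.1.val ∧ qr.1.2.val + 1 = qr.2.2.val ∧ s qr.1 = s qr.2}.ncard

noncomputable def z1 (s : BlockArray a b t) : ℝ := 2 * zr1 s + 2 * zc1 s

noncomputable def z2 (s : BlockArray a b t) : ℝ :=
  2 * zr2 s + 2 * zc2 s + 4 * zd1 s + 4 * zd2 s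

/-- `η = 4p − 2a − 2b − 2(8ab − 7a − 7b + 4)/t + 4(2p − a − b)²/(pt)` where `p = ab`. -/
noncomputable def eta (a b t : ℕ) : ℝ :=
  4 * ((a : ℝ) * b) - 2 * a - 2 * b - 2 * (8 * (a : ℝ) * b - 7 * a - 7 * b + 4) / t +
    4 * (2 * (a : ℝ) * b - a - b) ^ 2 / (((a : ℝ) * b) * t)

/-- A corner plot of the `a × b` block. -/
def IsCorner (q : Plot a b) : Prop :=
  (q.1.val = 0 ∨ q.1.val + 1 = a) ∧ (q.2.val = 0 ∨ q.2.val + 1 = b)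

/-- Treatment `k` is significant in `s`: it occupies exactly two plots, which are
neighbors, at least one of them being a corner plot. -/
def Significant (s : BlockArray a b t) (k : Fin t) : Prop :=
  ∃ u v : Plot a b, u ≠ v ∧ {q : Plot a b | s q = k} = {u, v} ∧
    Neighbor u v ∧ (IsCorner u ∨ IsCorner v)

/-- Treatment `k` is strictly significant in `s`: both of its two plots are corners. -/
def StrictSignificant (s : BlockArray a b t) (k : Fin t) : Prop :=
  ∃ u v : Plot a b, u ≠ v ∧ {q : Plot a b | s q = k} = {u, v} ∧
    Neighbor u v ∧ IsCorner u ∧ IsCorner v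

/-- `Q_i`: block arrays with exactly `i` significant treatments in which every other
treatment appears at most once. -/
def Qset (a b t : ℕ) (i : ℕ) : Set (BlockArray a b t) :=
  {s | {k : Fin t | Significant s k}.ncard = i ∧
       ∀ k : Fin t, ¬ Significant s k → f0 s k ≤ 1}

/-- `Q_j*`: members of `Q_j` whose significant treatments are all strictly significant. -/
def QsetStar (a b t : ℕ) (j : ℕ) : Set (BlockArray a b t) :=
  {s | s ∈ Qset a b t j ∧ ∀ k : Fin t, Significant s k → StrictSignificant s k}

/-- Treatment `k` is connected in `s`. -/
def ConnectedIn (s : BlockArray a b t) (k : Fin t) : Prop :=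
  ∀ q r : Plot a b, s q = k → s r = k →
    Relation.ReflTransGen (fun u v => Neighbor u v ∧ s u = k ∧ s v = k) q r

/-- Degree of a plot. -/
def dg (q : Plot a b) : ℝ := ∑ r, Mmat a b r q

lemma trace_key (s : BlockArray a b t) (A : Matrix (Plot a b) (Plot a b) ℝ) :
    Matrix.trace (Bmat (Fin t) * ((Tmat s)ᵀ * A * Tmat s)) =
      ∑ q, ∑ r, A q r * ((if s q = s r then 1 else 0) - (t : ℝ)⁻¹) := by
  have h1 : Matrix.trace (Bmat (Fin t) * ((Tmat s)ᵀ * A * Tmat s)) =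
      Matrix.trace (A * (Tmat s * Bmat (Fin t) * (Tmat s)ᵀ)) := by
    rw [Matrix.mul_assoc, ← Matrix.mul_assoc, Matrix.trace_mul_comm,
      Matrix.mul_assoc, ← Matrix.mul_assoc (Tmat s)]
  have h2 : ∀ q r, (Tmat s * Bmat (Fin t) * (Tmat s)ᵀ) q r =
      (if s q = s r then 1 else 0) - (t : ℝ)⁻¹ := by
    intro q r
    simp [Matrix.mul_apply, Tmat, Bmat, Jmat, Matrix.one_apply]
  rw [h1]
  simp only [Matrix.trace, Matrix.diag]
  refine Finset.sum_congr rfl fun q _ => ?_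
  rw [Matrix.mul_apply]
  refine Finset.sum_congr rfl fun r _ => ?_
  rw [h2]
  simp only [eq_comm]

/-- `u, v` is the only pair of plots sharing a treatment. -/
def OnlyPair (s : BlockArray a b t) (u v : Plot a b) : Prop :=
  u ≠ v ∧ s u = s v ∧ ∀ q r, q ≠ r → s q = s r → (q = u ∧ r = v) ∨ (q = v ∧ r = u)

lemma trace_pair (s : BlockArray a b t) (A : Matrix (Plot a b) (Plot a b) ℝ) (u v : Plot a b)
    (h : OnlyPair s u v) :
    Matrix.trace (Bmat (Fin t) * ((Tmat s)ᵀ * A * Tmat s)) =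
      (∑ q, A q q - (t : ℝ)⁻¹ * ∑ q, ∑ r, A q r) + (A u v + A v u) := by
  rw [trace_key]
  have h1 : ∀ q r, A q r * ((if s q = s r then 1 else 0) - (t : ℝ)⁻¹) =
      (if q = r then A q r else 0) - (t : ℝ)⁻¹ * A q r +
      ((if q = u then (if r = v then A q r else 0) else 0) +
       (if q = v then (if r = u then A q r else 0) else 0)) := by
    intro q r
    obtain ⟨hne, hs, hu⟩ := h
    by_cases hqr : q = r
    · subst hqr
      have h1 : ¬ (q = u ∧ q = v) := by rintro ⟨rfl, rfl⟩; exact hne rfl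
      by_cases hq : q = u <;> by_cases hq' : q = v <;> simp_all <;> ring
    · by_cases hsq : s q = s r
      · rcases hu q r hqr hsq with ⟨rfl, rfl⟩ | ⟨rfl, rfl⟩
        · simp [hsq, hne]; ring
        · simp [hsq, hne, Ne.symm hne]; ring
      · have e1 : ¬ (q = u ∧ r = v) := by rintro ⟨rfl, rfl⟩; exact hsq hs
        have e2 : ¬ (q = v ∧ r = u) := by rintro ⟨rfl, rfl⟩; exact hsq hs.symm
        simp only [hsq, hqr, if_false, ← ite_and, e1, e2]
        ring
  simp only [h1, Finset.sum_add_distrib, Finset.sum_sub_distrib, ← Finset.mul_sum]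
  simp

lemma neighbor_symm {q r : Plot a b} (h : Neighbor q r) : Neighbor r q := by
  unfold Neighbor at *
  rcases h with ⟨h, h'⟩ | ⟨h, h'⟩
  · exact Or.inl ⟨h.symm, h'.symm⟩
  · exact Or.inr ⟨h.symm, h'.symm⟩

lemma neighbor_irrefl (q : Plot a b) : ¬ Neighbor q q := by
  unfold Neighbor; omega

lemma M_symm : (Mmat a b)ᵀ = Mmat a b := by
  ext q r
  simp only [Matrix.transpose_apply, Mmat, Matrix.of_apply]
  have : Neighbor r q ↔ Neighbor q r := ⟨neighbor_symm, neighbor_symm⟩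
  simp [this]

lemma qpoly_pair (x : ℝ) (W : Matrix (Plot a b) (Plot a b) ℝ) : ∃ C : ℝ,
    ∀ (s : BlockArray a b t) (u v : Plot a b), OnlyPair s u v →
    qpoly W s x = C + (W u v + W v u) +
      2 * ((W * Mmat a b) u v + (W * Mmat a b) v u) * x +
      ((Mmat a b * W * Mmat a b) u v + (Mmat a b * W * Mmat a b) v u) * x ^ 2 := by
  refine ⟨(∑ q, W q q - (t : ℝ)⁻¹ * ∑ q, ∑ r, W q r) +
    2 * (∑ q, (W * Mmat a b) q q - (t : ℝ)⁻¹ * ∑ q, ∑ r, (W * Mmat a b) q r) * x +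
    (∑ q, (Mmat a b * W * Mmat a b) q q -
      (t : ℝ)⁻¹ * ∑ q, ∑ r, (Mmat a b * W * Mmat a b) q r) * x ^ 2, ?_⟩
  intro s u v h
  have e1 : Cs01 W s = (Tmat s)ᵀ * (W * Mmat a b) * Tmat s := by
    simp only [Cs01, Fmat, Matrix.mul_assoc]
  have e2 : Cs11 W s = (Tmat s)ᵀ * (Mmat a b * W * Mmat a b) * Tmat s := by
    simp only [Cs11, Fmat, Matrix.transpose_mul, M_symm, Matrix.mul_assoc]
  rw [qpoly, cs00, cs01, cs11, e1, e2, Cs00, trace_pair s _ u v h, trace_pair s _ u v h,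
    trace_pair s _ u v h]
  ring

lemma M_sum_left (q : Plot a b) : ∑ r, Mmat a b q r = dg q := by
  unfold dg
  refine Finset.sum_congr rfl fun r _ => ?_
  exact congrFun (congrFun M_symm r) q

lemma M_val {u v : Plot a b} (h : Neighbor u v) : Mmat a b u v = 1 := by
  simp [Mmat, h]

lemma WM_apply (u v : Plot a b) : (Bmat (Plot a b) * Mmat a b) u v =
    Mmat a b u v - ((a : ℝ) * b)⁻¹ * dg v := by
  rw [Bmat, Matrix.sub_mul, Matrix.one_mul, Matrix.sub_apply, Matrix.smul_mul, Matrix.smul_apply]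
  simp [Matrix.mul_apply, Jmat, dg]

lemma MM_zero {u v : Plot a b} (h : Neighbor u v) : (Mmat a b * Mmat a b) u v = 0 := by
  rw [Matrix.mul_apply]
  refine Finset.sum_eq_zero fun r _ => ?_
  simp only [Mmat, Matrix.of_apply]
  by_cases h1 : Neighbor u r
  · by_cases h2 : Neighbor r v
    · exfalso
      unfold Neighbor at *
      omega
    · simp [h2]
  · simp [h1]

lemma MWM_apply {u v : Plot a b} (h : Neighbor u v) :
    (Mmat a b * Bmat (Plot a b) * Mmat a b) u v = - (((a : ℝ) * b)⁻¹ * dg u * dg v) := by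
  rw [Matrix.mul_assoc, Matrix.mul_apply]
  simp only [WM_apply, mul_sub, Finset.sum_sub_distrib]
  rw [← Matrix.mul_apply, MM_zero h, ← Finset.sum_mul, M_sum_left]
  ring

lemma qpoly_pair' (x : ℝ) : ∃ C : ℝ,
    ∀ (s : BlockArray a b t) (u v : Plot a b), OnlyPair s u v → Neighbor u v →
    qpoly (Bmat (Plot a b)) s x = C + 4 * x -
      2 * ((a : ℝ) * b)⁻¹ * ((1 + x * dg u) * (1 + x * dg v)) := by
  obtain ⟨C, hC⟩ := qpoly_pair (t := t) x (Bmat (Plot a b))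
  refine ⟨C, fun s u v h hn => ?_⟩
  have hn' := neighbor_symm hn
  have e1 : Bmat (Plot a b) u v = -((a : ℝ) * b)⁻¹ := by
    simp [Bmat, Jmat, h.1]
  have e2 : Bmat (Plot a b) v u = -((a : ℝ) * b)⁻¹ := by
    simp [Bmat, Jmat, h.1.symm]
  rw [hC s u v h, MWM_apply hn, MWM_apply hn', WM_apply, WM_apply, M_val hn, M_val hn', e1, e2]
  ring

lemma sum_up (n j : ℕ) : ∑ c : Fin n, (if j + 1 = c.val then (1 : ℝ) else 0) =
    if j + 1 < n then 1 else 0 := by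
  split_ifs with h
  · rw [Finset.sum_eq_single ⟨j + 1, h⟩]
    · simp
    · intro c _ hc
      rw [if_neg]
      intro h'
      exact hc (Fin.ext h'.symm)
    · simp
  · refine Finset.sum_eq_zero fun c _ => ?_
    rw [if_neg]
    omega

lemma sum_down (n j : ℕ) (hj : j < n) : ∑ c : Fin n, (if c.val + 1 = j then (1 : ℝ) else 0) =
    if 1 ≤ j then 1 else 0 := by
  split_ifs with h
  · rw [Finset.sum_eq_single ⟨j - 1, by omega⟩]
    · rw [if_pos]
      simp only
      omega
    · intro c _ hc
      rw [if_neg]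
      intro h'
      exact hc (Fin.ext (by simp only; omega))
    · simp
  · refine Finset.sum_eq_zero fun c _ => ?_
    rw [if_neg]
    omega

lemma dg_eq (q : Plot a b) : dg q =
    (if q.2.val + 1 < b then (1 : ℝ) else 0) + (if 1 ≤ q.2.val then (1 : ℝ) else 0) +
    ((if q.1.val + 1 < a then (1 : ℝ) else 0) + (if 1 ≤ q.1.val then (1 : ℝ) else 0)) := by
  rw [← M_sum_left]
  have h1 : ∀ r : Plot a b, Mmat a b q r =
      (if q.1 = r.1 then ((if q.2.val + 1 = r.2.val then (1 : ℝ) else 0) +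
        (if r.2.val + 1 = q.2.val then (1 : ℝ) else 0)) else 0) +
      (if q.2 = r.2 then ((if q.1.val + 1 = r.1.val then (1 : ℝ) else 0) +
        (if r.1.val + 1 = q.1.val then (1 : ℝ) else 0)) else 0) := by
    intro r
    simp only [Mmat, Matrix.of_apply, Neighbor]
    by_cases e1 : q.1 = r.1 <;> by_cases e2 : q.2 = r.2
    · simp [e1, e2]
    · by_cases e3 : q.2.val + 1 = r.2.val
      · have e4 : ¬ (r.2.val + 1 = q.2.val) := by omega
        simp [e1, e2, e3, e4]
      · simp [e1, e2, e3]
    · by_cases e3 : q.1.val + 1 = r.1.val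
      · have e4 : ¬ (r.1.val + 1 = q.1.val) := by omega
        simp [e1, e2, e3, e4]
      · simp [e1, e2, e3]
    · simp [e1, e2]
  simp only [h1, Finset.sum_add_distrib]
  congr 1
  · rw [Fintype.sum_prod_type]
    simp only [Finset.sum_ite_irrel, Finset.sum_add_distrib, sum_up, sum_down _ _ q.2.isLt]
    simp
  · rw [Fintype.sum_prod_type_right]
    simp only [Finset.sum_ite_irrel, Finset.sum_add_distrib, sum_up, sum_down _ _ q.1.isLt]
    simp

lemma dg_noncorner (ha : 3 ≤ a) (hb : 3 ≤ b) (q : Plot a b) (h : ¬ IsCorner q) : 3 ≤ dg q := by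
  rw [dg_eq]
  unfold IsCorner at h
  have := q.1.isLt
  have := q.2.isLt
  split_ifs <;> first | (exfalso; omega) | norm_num

lemma dg_corner (ha : 3 ≤ a) (hb : 3 ≤ b) (u v : Plot a b) (h : IsCorner u)
    (hn : Neighbor u v) : dg u = 2 ∧ dg v = 3 := by
  rw [dg_eq, dg_eq]
  unfold IsCorner at h
  unfold Neighbor at hn
  have := u.1.isLt
  have := u.2.isLt
  have := v.1.isLt
  have := v.2.isLt
  constructor
  · split_ifs <;> first | (exfalso; omega) | norm_num
  · split_ifs <;> first | (exfalso; omega) | norm_num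

lemma xstar_pos (a b t : ℕ) (ha : 3 ≤ a) (hab : a ≤ b) (ht : t + 1 = a * b) :
    0 < (((a : ℝ) * b) - ((a : ℝ) + b - 5 / 2)) /
        (eta a b t * ((a : ℝ) * b) - (16 * ((a : ℝ) * b) - 14 * a - 14 * b + 20)) := by
  have hA : (3 : ℝ) ≤ a := by exact_mod_cast ha
  have hB : (3 : ℝ) ≤ b := by exact_mod_cast ha.trans hab
  have hT : (t : ℝ) + 1 = a * b := by exact_mod_cast ht
  set σ : ℝ := (a : ℝ) + b with hσ
  set p : ℝ := (a : ℝ) * b with hp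
  have hpσ : 3 * σ - 9 ≤ p := by nlinarith
  have hσ6 : 6 ≤ σ := by linarith
  have ht' : (t : ℝ) = p - 1 := by linarith
  have htp : 0 < (t : ℝ) := by linarith
  have hp0 : 0 < p := by linarith
  apply div_pos
  · linarith
  · have key : eta a b t * p - (16 * p - 14 * a - 14 * b + 20) =
        ((p - 1) * (p * (4 * p - 2 * σ - 16) + 14 * σ - 20)
          + (4 * σ ^ 2 - 2 * σ * p - 8 * p)) / t := by
      have e1 : 8 * (a : ℝ) * b = 8 * p := by rw [hp]; ring
      have e2 : 2 * (a : ℝ) * b = 2 * p := by rw [hp]; ring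
      have e3 : (b : ℝ) = σ - a := by rw [hσ]; ring
      unfold eta
      rw [e1, e2, ← hp, ht']
      rw [ht'] at htp
      field_simp
      rw [e3]
      ring
    rw [key]
    apply div_pos _ htp
    have h1 : 8 * p ≤ p * (4 * p - 2 * σ - 16) := by nlinarith
    have h2 : (p - 1) * (8 * p + 14 * σ - 20) ≤
        (p - 1) * (p * (4 * p - 2 * σ - 16) + 14 * σ - 20) :=
      mul_le_mul_of_nonneg_left (by linarith) (by linarith)
    nlinarith

lemma exists_onlyPair (s : BlockArray a b t) (ht : t + 1 = a * b) (hs : Function.Surjective s) :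
    ∃ u v, OnlyPair s u v := by
  have hc : Fintype.card (Fin t) < Fintype.card (Plot a b) := by simp; omega
  obtain ⟨u, v, hne, huv⟩ := Fintype.exists_ne_map_eq_of_card_lt s hc
  have hi : (Finset.univ.erase v).image s = Finset.univ := by
    refine Finset.eq_univ_of_forall fun k => ?_
    obtain ⟨q, rfl⟩ := hs k
    by_cases hq : q = v
    · subst hq
      exact Finset.mem_image.2 ⟨u, by simp [hne], huv⟩
    · exact Finset.mem_image.2 ⟨q, by simp [hq], rfl⟩
  have hinj : Set.InjOn s (Finset.univ.erase v : Finset (Plot a b)) := by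
    rw [← Finset.card_image_iff, hi]
    simp
    omega
  refine ⟨u, v, hne, huv, fun q r hqr hsq => ?_⟩
  have hu : u ∈ ((Finset.univ.erase v : Finset (Plot a b)) : Set (Plot a b)) := by simp [hne]
  by_cases hq : q = v
  · subst hq
    right
    refine ⟨rfl, hinj ?_ hu (by rw [← hsq, huv])⟩
    simp [Ne.symm hqr]
  · by_cases hr : r = v
    · subst hr
      left
      exact ⟨hinj (by simp [hq]) hu (by rw [hsq, huv]), rfl⟩
    · exact absurd (hinj (by simp [hq]) (by simp [hr]) hsq) hqr

lemma Q1_of_corner (s : BlockArray a b t) (u v : Plot a b) (h : OnlyPair s u v)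
    (hn : Neighbor u v) (hc : IsCorner u ∨ IsCorner v) : s ∈ Qset a b t 1 := by
  obtain ⟨hne, huv, hu⟩ := h
  have hsig : Significant s (s u) := by
    refine ⟨u, v, hne, ?_, hn, hc⟩
    ext q
    simp only [Set.mem_ofPred_eq, Set.mem_insert_iff, Set.mem_singleton_iff]
    constructor
    · intro hq
      by_cases hqu : q = u
      · exact Or.inl hqu
      · rcases hu q u hqu hq with h | h
        · exact Or.inl h.1
        · exact Or.inr h.1
    · rintro (rfl | rfl)
      · rfl
      · exact huv.symm
  constructor
  · rw [Set.ncard_eq_one]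
    refine ⟨s u, ?_⟩
    ext k
    simp only [Set.mem_ofPred_eq, Set.mem_singleton_iff]
    constructor
    · rintro ⟨q, r, hqr, hset, -, -⟩
      have hq : s q = k := by
        have : q ∈ {q : Plot a b | s q = k} := by rw [hset]; simp
        exact this
      have hr : s r = k := by
        have : r ∈ {q : Plot a b | s q = k} := by rw [hset]; simp
        exact this
      rcases hu q r hqr (hq.trans hr.symm) with h | h
      · rw [← hq, h.1]
      · rw [← hr, h.2]
    · rintro rfl
      exact hsig
  · intro k hk
    unfold f0
    rw [Set.ncard_le_one]
    intro q hq r hr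
    by_contra hqr
    simp only [Set.mem_ofPred_eq] at hq hr
    apply hk
    rcases hu q r hqr (hq.trans hr.symm) with h | h
    · rw [← hq, h.1]; exact hsig
    · rw [← hr, h.2]; exact hsig

lemma pair_of_Q1 (s : BlockArray a b t) (h : s ∈ Qset a b t 1) :
    ∃ u v, OnlyPair s u v ∧ Neighbor u v ∧ (IsCorner u ∨ IsCorner v) := by
  obtain ⟨h1, h2⟩ := h
  rw [Set.ncard_eq_one] at h1
  obtain ⟨k, hk⟩ := h1
  have hsk : Significant s k := by
    have : k ∈ {k : Fin t | Significant s k} := by rw [hk]; simp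
    exact this
  obtain ⟨u, v, hne, hset, hn, hc⟩ := hsk
  have hmem : ∀ q, s q = k ↔ q = u ∨ q = v := by
    intro q
    have : q ∈ {q : Plot a b | s q = k} ↔ q ∈ ({u, v} : Set (Plot a b)) := by rw [hset]
    simpa using this
  refine ⟨u, v, ⟨hne, ?_, ?_⟩, hn, hc⟩
  · rw [(hmem u).2 (Or.inl rfl), (hmem v).2 (Or.inr rfl)]
  · intro q r hqr hs
    have hqk : s q = k := by
      by_contra hqk
      have hns : ¬ Significant s (s q) := by
        intro hsig
        have : s q ∈ {k : Fin t | Significant s k} := hsig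
        rw [hk] at this
        exact hqk this
      have h3 := h2 _ hns
      unfold f0 at h3
      rw [Set.ncard_le_one] at h3
      exact hqr (h3 q rfl r hs.symm)
    have hrk : s r = k := hs ▸ hqk
    rcases (hmem q).1 hqk with e1 | e1 <;> rcases (hmem r).1 hrk with e2 | e2
    · exact absurd (e1.trans e2.symm) hqr
    · exact Or.inl ⟨e1, e2⟩
    · exact Or.inr ⟨e1, e2⟩
    · exact absurd (e1.trans e2.symm) hqr

/-- Lemma `lemma 33`: for `t = p − 1` and `a ≥ 3`, any array with all
`p − 1` treatments occurring and all treatments connected which is not in `Q₁` is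
strictly beaten at `x*` by any array of `Q₁`. -/
theorem connected_not_Q1_beaten
    (a b t : ℕ) (ha : 3 ≤ a) (hab : a ≤ b) (ht : t + 1 = a * b)
    (xstar : ℝ)
    (hx : xstar = (((a : ℝ) * b) - ((a : ℝ) + b - 5 / 2)) /
        (eta a b t * ((a : ℝ) * b) - (16 * ((a : ℝ) * b) - 14 * a - 14 * b + 20)))
    (s sstar : BlockArray a b t)
    (hdist : {k : Fin t | ∃ q : Plot a b, s q = k}.ncard = a * b - 1)
    (hconn : ∀ k : Fin t, ConnectedIn s k)
    (hnot : s ∉ Qset a b t 1)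
    (hstar : sstar ∈ Qset a b t 1) :
    qpoly (Bmat (Plot a b)) s xstar < qpoly (Bmat (Plot a b)) sstar xstar := by
  have hb : 3 ≤ b := ha.trans hab
  have hxpos : 0 < xstar := by rw [hx]; exact xstar_pos a b t ha hab ht
  clear hx
  have hsurj : Function.Surjective s := by
    have h1 : {k : Fin t | ∃ q : Plot a b, s q = k} = Set.univ := by
      apply Set.eq_of_subset_of_ncard_le (Set.subset_univ _)
      rw [hdist, Set.ncard_univ, Nat.card_eq_fintype_card, Fintype.card_fin]
      omega
    intro k
    have : k ∈ {k : Fin t | ∃ q : Plot a b, s q = k} := by rw [h1]; trivial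
    exact this
  obtain ⟨u, v, huv⟩ := exists_onlyPair s ht hsurj
  have hn : Neighbor u v := by
    have h := hconn (s u) u v rfl huv.2.1.symm
    rcases Relation.ReflTransGen.cases_head h with h | ⟨c, ⟨hc, -, hc2⟩, -⟩
    · exact absurd h huv.1
    · have huc : u ≠ c := by
        rintro rfl
        exact neighbor_irrefl _ hc
      rcases huv.2.2 u c huc hc2.symm with h | h
      · rw [← h.2]; exact hc
      · exact absurd h.1 huv.1
  have hnc : ¬ (IsCorner u ∨ IsCorner v) := fun hc => hnot (Q1_of_corner s u v huv hn hc)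
  have hu3 := dg_noncorner ha hb u (fun h => hnc (Or.inl h))
  have hv3 := dg_noncorner ha hb v (fun h => hnc (Or.inr h))
  obtain ⟨u', v', huv', hn', hc'⟩ := pair_of_Q1 sstar hstar
  obtain ⟨C, hC⟩ := qpoly_pair' (a := a) (b := b) (t := t) xstar
  have hp : (0 : ℝ) < ((a : ℝ) * b)⁻¹ := by
    have : (0 : ℝ) < a := by exact_mod_cast (by omega : 0 < a)
    have : (0 : ℝ) < b := by exact_mod_cast (by omega : 0 < b)
    positivity
  have hstar' : (1 + xstar * dg u') * (1 + xstar * dg v') =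
      (1 + xstar * 2) * (1 + xstar * 3) := by
    rcases hc' with hc | hc
    · obtain ⟨e1, e2⟩ := dg_corner ha hb u' v' hc hn'
      rw [e1, e2]
    · obtain ⟨e1, e2⟩ := dg_corner ha hb v' u' hc (neighbor_symm hn')
      rw [e1, e2]; ring
  rw [hC s u v huv hn, hC sstar u' v' huv' hn', hstar']
  have h1 : (1 + xstar * 3) * (1 + xstar * 3) ≤ (1 + xstar * dg u) * (1 + xstar * dg v) := by
    have e1 : 1 + xstar * 3 ≤ 1 + xstar * dg u := by nlinarith
    have e2 : 1 + xstar * 3 ≤ 1 + xstar * dg v := by nlinarith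
    exact mul_le_mul e1 e2 (by positivity) (by linarith [mul_pos hxpos three_pos])
  have h2 : (1 + xstar * 2) * (1 + xstar * 3) < (1 + xstar * dg u) * (1 + xstar * dg v) := by
    nlinarith
  have h3 := mul_lt_mul_of_pos_left h2 hp
  linarith

end TwoDim
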